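/- arXiv:2512.09712 — 5 statements merged into one kernel-verified Lean document; each statement's English description precedes it below -/
import Mathlib

section
/- Let f : ℝⁿ → ℝ be a twice continuously differentiable convex function with global minimizer x*, write f* = f(x*), and let x : [0,∞) → ℝⁿ be a twice differentiable solution of ∇²f(x(t))·ẋ(t) + ∇f(x(t)) = 0. Then for every k with 0 ≤ k ≤ 1, the function E(t) = k·e^{kt}·( f* − f(x(t)) + ⟨∇f(x(t)), x(t) − x*⟩ ) + e^{kt}·( f(x(t)) − f* ) is non-increasing on [0,∞), and satisfies E(t) ≥ e^{kt}·( f(x(t)) − f* ) for all t ≥ 0. -/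
open scoped RealInnerProductSpace

/-!
Let `p t = ∇f (x t)`, so that the flow reads `p' = -p`. With `g t = f (x t) - f*` and
`D t = f* - f (x t) + ⟪p t, x t - x*⟫`, the derivative `⟪p, x'⟫` of `f ∘ x` cancels in `D'`,
leaving `D' = ⟪p', x - x*⟫ = -(D + g)`. Hence `E = exp (k t) (k D + g)` has derivative
`exp (k t) (g' - k (1 - k) D)`. Convexity makes both terms nonpositive: `D ≥ 0` is the gradient
inequality at `x t`, and `g' = ⟪p, x'⟫ = -⟪p', x'⟫ ≤ 0` because gradients are monotone.

The same computation applies to the differential inclusion `p ∈ ∂f (x)`, `p' = -p`: the chain rule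
`(f ∘ x)' = ⟪p, x'⟫` holds along any continuous choice of subgradients, since the Bregman divergence
of `x r` from `x t` lies between `0` and `‖p r - p t‖ * ‖x r - x t‖ = o(r - t)`.
-/

open Set Filter Topology

section Subgradient

variable {E : Type*} [NormedAddCommGroup E] [InnerProductSpace ℝ E]
  {f : E → ℝ} {p q y z : E}

/-- The vector `p` is a subgradient of `f` at `y`, i.e. `p ∈ ∂f (y)`. This is the form in which
convexity of `f` is used along the flow. -/
def IsSubgradientAt (f : E → ℝ) (p y : E) : Prop :=
  ∀ z, f y + ⟪p, z - y⟫ ≤ f z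

/-- The Bregman divergence `f z - f y - ⟪p, z - y⟫` of `z` from `y` relative to the slope `p`
at `y`, with the inner product written as `⟪p, y - z⟫` as in the Lyapunov function. -/
def bregmanDiv (f : E → ℝ) (p y z : E) : ℝ :=
  f z - f y + ⟪p, y - z⟫

lemma inner_sub_sub_eq_bregmanDiv_add_bregmanDiv (f : E → ℝ) (p q y z : E) :
    ⟪p - q, y - z⟫ = bregmanDiv f p y z + bregmanDiv f q z y := by
  simp only [bregmanDiv, inner_sub_left, inner_sub_right]
  ring

namespace IsSubgradientAt

lemma bregmanDiv_nonneg (hp : IsSubgradientAt f p y) (z : E) : 0 ≤ bregmanDiv f p y z := by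
  have h := hp z
  rw [← neg_sub y z, inner_neg_right] at h
  unfold bregmanDiv
  linarith

lemma inner_sub_sub_nonneg (hp : IsSubgradientAt f p y) (hq : IsSubgradientAt f q z) :
    0 ≤ ⟪p - q, y - z⟫ := by
  rw [inner_sub_sub_eq_bregmanDiv_add_bregmanDiv f]
  exact add_nonneg (hp.bregmanDiv_nonneg z) (hq.bregmanDiv_nonneg y)

lemma bregmanDiv_le_norm_mul_norm (hp : IsSubgradientAt f p y) (q z : E) :
    bregmanDiv f q z y ≤ ‖p - q‖ * ‖y - z‖ :=
  calc bregmanDiv f q z y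
    _ ≤ bregmanDiv f p y z + bregmanDiv f q z y := le_add_of_nonneg_left (hp.bregmanDiv_nonneg z)
    _ = ⟪p - q, y - z⟫ := (inner_sub_sub_eq_bregmanDiv_add_bregmanDiv f p q y z).symm
    _ ≤ ‖p - q‖ * ‖y - z‖ := real_inner_le_norm _ _

end IsSubgradientAt

end Subgradient

section SubgradientCurve

variable {E : Type*} [NormedAddCommGroup E] [InnerProductSpace ℝ E]
  {f : E → ℝ} {x p : ℝ → E} {v w : E} {s : Set ℝ} {t : ℝ}

lemma inner_deriv_deriv_nonneg_of_inner_sub_sub_nonneg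
    (hmono : ∀ r ∈ s, 0 ≤ ⟪p r - p t, x r - x t⟫) (ht : AccPt t (𝓟 s))
    (hp : HasDerivWithinAt p w s t) (hx : HasDerivWithinAt x v s t) : 0 ≤ ⟪w, v⟫ := by
  have : (𝓝[s \ {t}] t).NeBot := accPt_principal_iff_nhdsWithin.1 ht
  refine ge_of_tendsto ((hasDerivWithinAt_iff_tendsto_slope.1 hp).inner
    (hasDerivWithinAt_iff_tendsto_slope.1 hx)) ?_
  filter_upwards [self_mem_nhdsWithin] with r hr
  simp only [slope, vsub_eq_sub, real_inner_smul_left, real_inner_smul_right, ← mul_assoc]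
  exact mul_nonneg (mul_self_nonneg _) (hmono r hr.1)

lemma hasDerivWithinAt_bregmanDiv_zero (hsub : ∀ r ∈ s, IsSubgradientAt f (p r) (x r))
    (ht : t ∈ s) (hp : ContinuousWithinAt p s t) (hx : HasDerivWithinAt x v s t) :
    HasDerivWithinAt (fun r => bregmanDiv f (p t) (x t) (x r)) 0 s t := by
  rw [hasDerivWithinAt_iff_isLittleO]
  have hp_sub : (fun r => ‖p r - p t‖) =o[𝓝[s] t] fun _ => (1 : ℝ) := by
    rw [Asymptotics.isLittleO_one_iff]
    exact tendsto_iff_norm_sub_tendsto_zero.1 hp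
  have hprod : (fun r => ‖p r - p t‖ * ‖x r - x t‖) =o[𝓝[s] t] fun r => r - t := by
    simpa only [one_mul] using hp_sub.mul_isBigO hx.hasFDerivWithinAt.isBigO_sub.norm_left
  refine (Asymptotics.IsBigO.of_bound' ?_).trans_isLittleO hprod
  filter_upwards [self_mem_nhdsWithin] with r hr
  have hself : bregmanDiv f (p t) (x t) (x t) = 0 := by simp [bregmanDiv]
  rw [hself, smul_zero, sub_zero, sub_zero, Real.norm_of_nonneg ((hsub t ht).bregmanDiv_nonneg _)]
  exact ((hsub r hr).bregmanDiv_le_norm_mul_norm _ _).trans (le_abs_self _)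

lemma hasDerivWithinAt_comp_of_isSubgradientAt (hsub : ∀ r ∈ s, IsSubgradientAt f (p r) (x r))
    (ht : t ∈ s) (hp : ContinuousWithinAt p s t) (hx : HasDerivWithinAt x v s t) :
    HasDerivWithinAt (fun r => f (x r)) ⟪p t, v⟫ s t := by
  have hlin : HasDerivWithinAt (fun r => ⟪p t, x r - x t⟫) ⟪p t, v⟫ s t := by
    simpa using (hasDerivWithinAt_const t s (p t)).inner ℝ (hx.sub_const (x t))
  have hsum := ((hasDerivWithinAt_bregmanDiv_zero hsub ht hp hx).add hlin).add_const (f (x t))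
  rw [zero_add] at hsum
  refine hsum.congr_of_mem (fun r _ => ?_) ht
  simp only [bregmanDiv, Pi.add_apply, inner_sub_right]
  ring

lemma hasDerivWithinAt_bregmanDiv (hsub : ∀ r ∈ s, IsSubgradientAt f (p r) (x r)) (ht : t ∈ s)
    (hp : HasDerivWithinAt p w s t) (hx : HasDerivWithinAt x v s t) (z : E) :
    HasDerivWithinAt (fun r => bregmanDiv f (p r) (x r) z) ⟪w, x t - z⟫ s t := by
  have hfx := hasDerivWithinAt_comp_of_isSubgradientAt hsub ht hp.continuousWithinAt hx
  exact ((hfx.const_sub (f z)).add (hp.inner ℝ (hx.sub_const z))).congr_deriv (by ring)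

end SubgradientCurve

section DampedNewtonFlow

variable {E : Type*} [NormedAddCommGroup E] [InnerProductSpace ℝ E]
  {f : E → ℝ} {x p : ℝ → E} {v : E} {s : Set ℝ} {k t : ℝ}

/-- The Lyapunov function of the damped Newton flow with rate `k`, for a trajectory `x` with
slopes `p` and a reference point `z`; for the gradient flow, `p = ∇f ∘ x` and `z = x*`. -/
noncomputable def dampedNewtonEnergy (f : E → ℝ) (x p : ℝ → E) (z : E) (k t : ℝ) : ℝ :=
  k * Real.exp (k * t) * bregmanDiv f (p t) (x t) z + Real.exp (k * t) * (f (x t) - f z)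

lemma inner_velocity_nonpos_of_hasDerivWithinAt_neg
    (hsub : ∀ r ∈ s, IsSubgradientAt f (p r) (x r)) (ht : t ∈ s) (hacc : AccPt t (𝓟 s))
    (hp : HasDerivWithinAt p (-p t) s t) (hx : HasDerivWithinAt x v s t) : ⟪p t, v⟫ ≤ 0 := by
  have h := inner_deriv_deriv_nonneg_of_inner_sub_sub_nonneg
    (fun r hr => (hsub r hr).inner_sub_sub_nonneg (hsub t ht)) hacc hp hx
  rwa [inner_neg_left, neg_nonneg] at h

lemma hasDerivWithinAt_dampedNewtonEnergy (hsub : ∀ r ∈ s, IsSubgradientAt f (p r) (x r))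
    (ht : t ∈ s) (hp : HasDerivWithinAt p (-p t) s t) (hx : HasDerivWithinAt x v s t)
    (z : E) (k : ℝ) :
    HasDerivWithinAt (dampedNewtonEnergy f x p z k)
      (Real.exp (k * t) * (⟪p t, v⟫ - k * (1 - k) * bregmanDiv f (p t) (x t) z)) s t := by
  have hgap := (hasDerivWithinAt_comp_of_isSubgradientAt hsub ht hp.continuousWithinAt hx).sub_const
    (f z)
  have hdiv := hasDerivWithinAt_bregmanDiv hsub ht hp hx z
  have hexp : HasDerivWithinAt (fun r => Real.exp (k * r)) (Real.exp (k * t) * k) s t := by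
    simpa using ((hasDerivWithinAt_id t s).const_mul k).exp
  refine (((hexp.const_mul k).mul hdiv).add (hexp.mul hgap)).congr_deriv ?_
  simp only [bregmanDiv, inner_neg_left]
  ring

lemma antitoneOn_dampedNewtonEnergy {v : ℝ → E} (hs : Convex ℝ s)
    (hsub : ∀ t ∈ s, IsSubgradientAt f (p t) (x t))
    (hx : ∀ t ∈ s, HasDerivWithinAt x (v t) s t) (hp : ∀ t ∈ s, HasDerivWithinAt p (-p t) s t)
    (z : E) (hk : k ∈ Icc 0 1) : AntitoneOn (dampedNewtonEnergy f x p z k) s := by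
  have hderiv t ht := hasDerivWithinAt_dampedNewtonEnergy hsub ht (hp t ht) (hx t ht) z k
  refine antitoneOn_of_hasDerivWithinAt_nonpos hs (fun t ht => (hderiv t ht).continuousWithinAt)
    (fun t ht => (hderiv t (interior_subset ht)).mono interior_subset) fun t ht => ?_
  have ht' : t ∈ s := interior_subset ht
  have hacc : AccPt t (𝓟 s) :=
    uniqueDiffWithinAt_iff_accPt.1 (uniqueDiffWithinAt_of_mem_nhds (mem_interior_iff_mem_nhds.1 ht))
  have hdescent : ⟪p t, v t⟫ ≤ 0 :=
    inner_velocity_nonpos_of_hasDerivWithinAt_neg hsub ht' hacc (hp t ht') (hx t ht')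
  have hdamping : 0 ≤ k * (1 - k) * bregmanDiv f (p t) (x t) z :=
    mul_nonneg (mul_nonneg hk.1 (sub_nonneg.2 hk.2)) ((hsub t ht').bregmanDiv_nonneg z)
  exact mul_nonpos_of_nonneg_of_nonpos (Real.exp_pos _).le
    (sub_nonpos.2 (hdescent.trans hdamping))

lemma le_dampedNewtonEnergy (hsub : IsSubgradientAt f (p t) (x t)) (z : E) (hk : 0 ≤ k) :
    Real.exp (k * t) * (f (x t) - f z) ≤ dampedNewtonEnergy f x p z k t :=
  le_add_of_nonneg_left
    (mul_nonneg (mul_nonneg hk (Real.exp_pos _).le) (hsub.bregmanDiv_nonneg z))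

theorem damped_newton_flow_lyapunov_general {v : ℝ → E}
    (hsub : ∀ t, 0 ≤ t → IsSubgradientAt f (p t) (x t))
    (hx : ∀ t, 0 ≤ t → HasDerivWithinAt x (v t) (Ici 0) t)
    (hp : ∀ t, 0 ≤ t → HasDerivWithinAt p (-p t) (Ici 0) t)
    (z : E) (hk : k ∈ Icc 0 1) :
    AntitoneOn (dampedNewtonEnergy f x p z k) (Ici 0) ∧
      ∀ t, 0 ≤ t → Real.exp (k * t) * (f (x t) - f z) ≤ dampedNewtonEnergy f x p z k t :=
  ⟨antitoneOn_dampedNewtonEnergy (convex_Ici 0) hsub hx hp z hk,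
    fun t ht => le_dampedNewtonEnergy (hsub t ht) z hk.1⟩

end DampedNewtonFlow

/-- Lyapunov function for the damped-Newton flow: for a twice continuously
differentiable convex `f` with minimizer `x*` and a twice differentiable solution of
`∇²f(x(t))·ẋ(t) + ∇f(x(t)) = 0`, for every `0 ≤ k ≤ 1` the function
`E(t) = k·e^{kt}·(f* − f(x(t)) + ⟨∇f(x(t)), x(t) − x*⟩) + e^{kt}·(f(x(t)) − f*)`
is non-increasing on `[0,∞)` and dominates `e^{kt}·(f(x(t)) − f*)`. -/
theorem damped_newton_flow_lyapunov {n : ℕ}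
    (f : EuclideanSpace ℝ (Fin n) → ℝ)
    (xstar : EuclideanSpace ℝ (Fin n))
    (hf : ContDiff ℝ 2 f)
    (hmin : ∀ y, f xstar ≤ f y)
    (hconv : ∀ y z : EuclideanSpace ℝ (Fin n),
      f z ≥ f y + ⟪gradient f y, z - y⟫)
    (x v a H : ℝ → EuclideanSpace ℝ (Fin n))
    (hx : ∀ t : ℝ, 0 ≤ t → HasDerivAt x (v t) t)
    (hv : ∀ t : ℝ, 0 ≤ t → HasDerivAt v (a t) t)
    (hH : ∀ t : ℝ, 0 ≤ t → HasDerivAt (fun s => gradient f (x s)) (H t) t)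
    (hode : ∀ t : ℝ, 0 ≤ t → H t + gradient f (x t) = 0)
    (k : ℝ) (hk0 : 0 ≤ k) (hk1 : k ≤ 1) :
    AntitoneOn (fun t : ℝ =>
        k * Real.exp (k * t) * (f xstar - f (x t) + ⟪gradient f (x t), x t - xstar⟫)
          + Real.exp (k * t) * (f (x t) - f xstar)) (Set.Ici (0 : ℝ))
      ∧ ∀ t : ℝ, 0 ≤ t →
        k * Real.exp (k * t) * (f xstar - f (x t) + ⟪gradient f (x t), x t - xstar⟫)
          + Real.exp (k * t) * (f (x t) - f xstar)
        ≥ Real.exp (k * t) * (f (x t) - f xstar) :=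
  damped_newton_flow_lyapunov_general (p := fun t => gradient f (x t))
    (fun t _ => hconv (x t)) (fun t ht => (hx t ht).hasDerivWithinAt)
    (fun t ht => eq_neg_of_add_eq_zero_left (hode t ht) ▸ (hH t ht).hasDerivWithinAt)
    xstar ⟨hk0, hk1⟩
end

section
/- Let μ > 0 and let f : ℝⁿ → ℝ be a continuously differentiable μ-strongly convex function with global minimizer x*. Let x : [0,∞) → ℝⁿ be a twice differentiable solution of ẍ(t) + 2√μ·ẋ(t) + ∇f(x(t)) = 0 for all t ≥ 0. Then f(x(t)) − f(x*) = O( e^{−√μ·t} ) as t → ∞. -/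
open scoped RealInnerProductSpace

/-!
With `s = √μ`, the energy `E(t) = f(x) - f(x*) + ½‖ẋ + s (x - x*)‖²` satisfies `Ė ≤ -s E` along the
flow: substituting the equation into `Ė + s E` leaves `s` times
`f(x) - f(x*) - ⟪∇f(x), x - x*⟫ + (s²/2)‖x - x*‖² - ½‖ẋ‖²`, which strong convexity makes
nonpositive. Grönwall's inequality then gives `f(x) - f(x*) ≤ E(t) ≤ E(0) e^{-s t}`.
-/

theorem le_mul_exp_of_hasDerivWithinAt_le {φ φ' : ℝ → ℝ} {K a : ℝ}
    (hφ : ∀ t, a ≤ t → HasDerivWithinAt φ (φ' t) (Set.Ici a) t)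
    (hle : ∀ t, a ≤ t → φ' t ≤ K * φ t) {t : ℝ} (ht : a ≤ t) :
    φ t ≤ φ a * Real.exp (K * (t - a)) := by
  rw [← gronwallBound_ε0]
  refine le_gronwallBound_of_liminf_deriv_right_le (f' := φ')
    (fun r hr => (hφ r hr.1).continuousWithinAt.mono Set.Icc_subset_Ici_self)
    (fun r hr _ hlt => ((hφ r hr.1).mono (Set.Ici_subset_Ici.2 hr.1)).liminf_right_slope_le hlt)
    le_rfl (fun r hr => ?_) t (Set.right_mem_Icc.2 ht)
  simpa only [add_zero] using hle r hr.1

section NAGFlow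

variable {E : Type*} [NormedAddCommGroup E] [InnerProductSpace ℝ E]
  {s t : ℝ} {f : E → ℝ} {y p w a g d : E}

/-- The Lyapunov energy of the flow `ẍ + 2s ẋ + ∇f(x) = 0` relative to the point `y`, as a function
of position `p` and velocity `w`. -/
noncomputable def nagEnergy (s : ℝ) (f : E → ℝ) (y p w : E) : ℝ :=
  f p - f y + 1 / 2 * ‖w + s • (p - y)‖ ^ 2

theorem sub_le_nagEnergy : f p - f y ≤ nagEnergy s f y p w :=
  le_add_of_nonneg_right (by positivity)

theorem hasDerivWithinAt_nagEnergy [CompleteSpace E] {x v : ℝ → E} {S : Set ℝ}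
    (hf : HasGradientAt f g (x t)) (hx : HasDerivWithinAt x (v t) S t)
    (hv : HasDerivWithinAt v a S t) :
    HasDerivWithinAt (fun r => nagEnergy s f y (x r) (v r))
      (⟪g, v t⟫ + ⟪v t + s • (x t - y), a + s • v t⟫) S t := by
  have hfx : HasDerivWithinAt (fun r => f (x r)) ⟪g, v t⟫ S t :=
    hf.hasFDerivAt.comp_hasDerivWithinAt t hx
  have hmomentum : HasDerivWithinAt (fun r => v r + s • (x r - y)) (a + s • v t) S t :=
    hv.add ((hx.sub_const y).const_smul s)
  refine ((hfx.sub_const (f y)).add (hmomentum.norm_sq.const_mul (1 / 2))).congr_deriv ?_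
  ring

theorem inner_add_inner_eq_of_nagFlow (hode : a + (2 * s) • w + g = 0) :
    ⟪g, w⟫ + ⟪w + s • d, a + s • w⟫ =
      -s * (1 / 2 * ‖w + s • d‖ ^ 2 + 1 / 2 * ‖w‖ ^ 2 + ⟪g, d⟫ - s ^ 2 / 2 * ‖d‖ ^ 2) := by
  have ha : a + s • w = -(s • w) - g := by
    rw [eq_sub_iff_add_eq, ← sub_eq_zero, ← hode]
    module
  rw [ha, norm_add_sq_real, norm_smul, mul_pow, Real.norm_eq_abs, sq_abs]
  simp only [inner_add_left, inner_sub_right, inner_neg_right, real_inner_smul_left,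
    real_inner_smul_right, real_inner_self_eq_norm_sq]
  rw [real_inner_comm w g, real_inner_comm d g, real_inner_comm w d]
  ring

theorem inner_add_inner_le_neg_mul_nagEnergy (hs : 0 ≤ s) (hode : a + (2 * s) • w + g = 0)
    (hsc : f p + ⟪g, y - p⟫ + s ^ 2 / 2 * ‖y - p‖ ^ 2 ≤ f y) :
    ⟪g, w⟫ + ⟪w + s • (p - y), a + s • w⟫ ≤ -s * nagEnergy s f y p w := by
  rw [inner_add_inner_eq_of_nagFlow hode, nagEnergy, neg_mul, neg_mul, neg_le_neg_iff]
  rw [← neg_sub p y, inner_neg_right, norm_neg] at hsc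
  refine mul_le_mul_of_nonneg_left ?_ hs
  linarith [sq_nonneg ‖w‖]

theorem sc_nag_flow_rate_general [CompleteSpace E] {μ : ℝ} (hμ : 0 ≤ μ) (hf : Differentiable ℝ f)
    (hsc : ∀ z, f z + ⟪gradient f z, y - z⟫ + μ / 2 * ‖y - z‖ ^ 2 ≤ f y) {x v a : ℝ → E}
    (hx : ∀ t, 0 ≤ t → HasDerivWithinAt x (v t) (Set.Ici 0) t)
    (hv : ∀ t, 0 ≤ t → HasDerivWithinAt v (a t) (Set.Ici 0) t)
    (hode : ∀ t, 0 ≤ t → a t + (2 * √μ) • v t + gradient f (x t) = 0) (ht : 0 ≤ t) :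
    f (x t) - f y ≤ nagEnergy √μ f y (x 0) (v 0) * Real.exp (-√μ * t) := by
  have hdecay := le_mul_exp_of_hasDerivWithinAt_le
    (fun r hr => hasDerivWithinAt_nagEnergy (y := y) (hf (x r)).hasGradientAt (hx r hr) (hv r hr))
    (fun r hr => inner_add_inner_le_neg_mul_nagEnergy (Real.sqrt_nonneg μ) (hode r hr)
      (by simpa only [Real.sq_sqrt hμ] using hsc (x r))) ht
  rw [sub_zero] at hdecay
  exact sub_le_nagEnergy.trans hdecay

end NAGFlow

/-- For `μ > 0` and a continuously differentiable `μ`-strongly convex `f`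
with minimizer `x*`, any twice differentiable solution of
`ẍ(t) + 2√μ·ẋ(t) + ∇f(x(t)) = 0` satisfies `f(x(t)) − f(x*) = O(e^{−√μ·t})`. -/
theorem sc_nag_flow_rate {n : ℕ}
    (μ : ℝ) (hμ : 0 < μ)
    (f : EuclideanSpace ℝ (Fin n) → ℝ)
    (xstar : EuclideanSpace ℝ (Fin n))
    (hf : ContDiff ℝ 1 f)
    (hmin : ∀ y, f xstar ≤ f y)
    (hsc : ∀ y z : EuclideanSpace ℝ (Fin n),
      f z ≥ f y + ⟪gradient f y, z - y⟫ + μ / 2 * ‖z - y‖ ^ 2)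
    (x v a : ℝ → EuclideanSpace ℝ (Fin n))
    (hx : ∀ t : ℝ, 0 ≤ t → HasDerivAt x (v t) t)
    (hv : ∀ t : ℝ, 0 ≤ t → HasDerivAt v (a t) t)
    (hode : ∀ t : ℝ, 0 ≤ t →
      a t + (2 * Real.sqrt μ) • v t + gradient f (x t) = 0) :
    ∃ T C : ℝ, 0 < T ∧ 0 < C ∧
      ∀ t : ℝ, T ≤ t → f (x t) - f xstar ≤ C * Real.exp (-Real.sqrt μ * t) := by
  refine ⟨1, max (nagEnergy √μ f xstar (x 0) (v 0)) 1, one_pos, by positivity, fun t ht => ?_⟩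
  exact (sc_nag_flow_rate_general hμ.le (hf.differentiable one_ne_zero) (hsc · xstar)
    (fun r hr => (hx r hr).hasDerivWithinAt) (fun r hr => (hv r hr).hasDerivWithinAt) hode
    (zero_le_one.trans ht)).trans (by gcongr; exact le_max_left _ _)
end

section
/- Let μ > 0, let f : ℝⁿ → ℝ be a twice continuously differentiable μ-strongly convex function with global minimizer x*, write f* = f(x*), and let x : [0,∞) → ℝⁿ be a twice differentiable solution of ẍ(t) + √μ·ẋ(t) + (1/√μ)·∇²f(x(t))·ẋ(t) + ∇f(x(t)) = 0. Then the function E(t) = e^{√μ·t}·[ ( f* − f(x(t)) + ⟨∇f(x(t)), x(t) − x*⟩ ) + √μ·⟨x(t) − x*, ẋ(t)⟩ + (1/2)‖ẋ(t)‖² + ( f(x(t)) − f* ) ] is non-increasing on [0,∞) and satisfies E(t) ≥ e^{√μ·t}·( f(x(t)) − f* ) for all t ≥ 0. -/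
open scoped RealInnerProductSpace

/-!
The terms in `f` cancel, so the bracket is the phase-space energy
`⟪p, y - z⟫ + r⟪y - z, w⟫ + ‖w‖² / 2` with `r = √μ`, evaluated at position `y = x t`, gradient
`p = ∇f (x t)` and velocity `w = ẋ t`. Along the flow its derivative is
`r / 2 * ‖ẋ‖² - ⟪∇²f(x) ẋ, ẋ⟫ / r` minus `r` times the energy, and strong convexity, in the form
`r² * ‖ẋ‖² ≤ ⟪∇²f(x) ẋ, ẋ⟫`, makes the first difference nonpositive. For the lower bound, complete
the square `‖r • (y - z) + w‖²` and use strong convexity between `y` and `z`.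
-/

theorem antitoneOn_exp_mul_of_hasDerivWithinAt_le {s : Set ℝ} (hs : Convex ℝ s) {r : ℝ}
    {φ φ' : ℝ → ℝ} (hφ : ∀ t ∈ s, HasDerivWithinAt φ (φ' t) s t)
    (hle : ∀ t ∈ interior s, φ' t ≤ -r * φ t) :
    AntitoneOn (fun t => Real.exp (r * t) * φ t) s := by
  have hderiv : ∀ t ∈ s, HasDerivWithinAt (fun t => Real.exp (r * t) * φ t)
      (Real.exp (r * t) * (r * φ t + φ' t)) s t := fun t ht => by
    have hexp : HasDerivWithinAt (fun t => Real.exp (r * t)) (Real.exp (r * t) * r) s t :=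
      (hasDerivAt_const_mul r).exp.hasDerivWithinAt
    exact (hexp.mul (hφ t ht)).congr_deriv (by ring)
  refine antitoneOn_of_hasDerivWithinAt_nonpos hs (fun t ht => (hderiv t ht).continuousWithinAt)
    (fun t ht => (hderiv t (interior_subset ht)).mono interior_subset) fun t ht => ?_
  exact mul_nonpos_of_nonneg_of_nonpos (Real.exp_pos _).le (by linarith [hle t ht])

section InnerProductSpace

variable {E : Type*} [NormedAddCommGroup E] [InnerProductSpace ℝ E]

theorem mul_norm_sq_le_inner_sub_of_strongConvex {μ : ℝ} {f : E → ℝ} {g : E → E}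
    (hsc : ∀ y z, f z ≥ f y + ⟪g y, z - y⟫ + μ / 2 * ‖z - y‖ ^ 2) (y z : E) :
    μ * ‖z - y‖ ^ 2 ≤ ⟪g z - g y, z - y⟫ := by
  have hyz := hsc y z
  have hzy := hsc z y
  rw [← neg_sub z y, inner_neg_right, norm_neg] at hzy
  rw [inner_sub_left]
  linarith

theorem mul_norm_sq_le_inner_of_hasDerivWithinAt {μ t : ℝ} {s : Set ℝ} {x p : ℝ → E} {v H : E}
    (hs : UniqueDiffWithinAt ℝ s t)
    (hmono : ∀ τ ∈ s, μ * ‖x τ - x t‖ ^ 2 ≤ ⟪p τ - p t, x τ - x t⟫)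
    (hx : HasDerivWithinAt x v s t) (hp : HasDerivWithinAt p H s t) :
    μ * ‖v‖ ^ 2 ≤ ⟪H, v⟫ := by
  have hx_slope := hasDerivWithinAt_iff_tendsto_slope.1 hx
  have hp_slope := hasDerivWithinAt_iff_tendsto_slope.1 hp
  have : (nhdsWithin t (s \ {t})).NeBot := accPt_principal_iff_nhdsWithin.1 hs.accPt
  refine le_of_tendsto_of_tendsto ((hx_slope.norm.pow 2).const_mul μ) (hp_slope.inner hx_slope) ?_
  filter_upwards [self_mem_nhdsWithin] with τ hτ
  calc μ * ‖slope x t τ‖ ^ 2 = (τ - t)⁻¹ ^ 2 * (μ * ‖x τ - x t‖ ^ 2) := by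
        rw [slope_def_module, norm_smul, mul_pow, Real.norm_eq_abs, sq_abs]
        ring
    _ ≤ (τ - t)⁻¹ ^ 2 * ⟪p τ - p t, x τ - x t⟫ :=
        mul_le_mul_of_nonneg_left (hmono τ hτ.1) (sq_nonneg _)
    _ = ⟪slope p t τ, slope x t τ⟫ := by
        rw [slope_def_module, slope_def_module, real_inner_smul_left, real_inner_smul_right]
        ring

/-- The energy of a second-order flow with Hessian damping, relative to the reference point `z`,
as a function of the position `y`, the gradient `p` at `y` and the velocity `w`. Its decay rate
along the flow is `r`, the square root of the strong convexity constant. -/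
noncomputable def hessianFlowEnergy (r : ℝ) (z y p w : E) : ℝ :=
  ⟪p, y - z⟫ + r * ⟪y - z, w⟫ + 1 / 2 * ‖w‖ ^ 2

theorem inner_sub_le_hessianFlowEnergy (r : ℝ) (z y p w : E) :
    ⟪p, y - z⟫ - r ^ 2 / 2 * ‖y - z‖ ^ 2 ≤ hessianFlowEnergy r z y p w := by
  have hsquare : ‖r • (y - z) + w‖ ^ 2
      = r ^ 2 * ‖y - z‖ ^ 2 + 2 * (r * ⟪y - z, w⟫) + ‖w‖ ^ 2 := by
    rw [norm_add_sq_real, norm_smul, mul_pow, Real.norm_eq_abs, sq_abs, real_inner_smul_left]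
  rw [hessianFlowEnergy]
  linarith [sq_nonneg ‖r • (y - z) + w‖]

variable {r t : ℝ} {s : Set ℝ} {x v p : ℝ → E}

theorem hasDerivWithinAt_hessianFlowEnergy {v' a H : E} (z : E)
    (hx : HasDerivWithinAt x v' s t) (hv : HasDerivWithinAt v a s t)
    (hp : HasDerivWithinAt p H s t) :
    HasDerivWithinAt (fun t => hessianFlowEnergy r z (x t) (p t) (v t))
      (⟪p t, v'⟫ + ⟪H, x t - z⟫ + r * (⟪x t - z, a⟫ + ⟪v', v t⟫) + ⟪v t, a⟫) s t := by
  have hxz : HasDerivWithinAt (fun t => x t - z) v' s t := hx.sub_const z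
  refine (((hp.inner ℝ hxz).add ((hxz.inner ℝ hv).const_mul r)).add
    (hv.norm_sq.const_mul (1 / 2))).congr_deriv ?_
  ring

theorem hasDerivWithinAt_hessianFlowEnergy_of_flow (hr : r ≠ 0) {a H : E} (z : E)
    (hx : HasDerivWithinAt x (v t) s t) (hv : HasDerivWithinAt v a s t)
    (hp : HasDerivWithinAt p H s t) (hode : a + r • v t + (1 / r) • H + p t = 0) :
    HasDerivWithinAt (fun t => hessianFlowEnergy r z (x t) (p t) (v t))
      (r / 2 * ‖v t‖ ^ 2 - 1 / r * ⟪H, v t⟫ - r * hessianFlowEnergy r z (x t) (p t) (v t)) s t := by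
  have inner_acc (u : E) : ⟪u, a⟫ = -(r * ⟪u, v t⟫ + 1 / r * ⟪H, u⟫ + ⟪p t, u⟫) := by
    have ha : a = -(r • v t + (1 / r) • H + p t) := by
      rw [eq_neg_iff_add_eq_zero, ← hode]
      abel
    rw [ha, inner_neg_right, inner_add_right, inner_add_right, real_inner_smul_right,
      real_inner_smul_right, real_inner_comm H, real_inner_comm (p t)]
  refine (hasDerivWithinAt_hessianFlowEnergy z hx hv hp).congr_deriv ?_
  rw [inner_acc, inner_acc, real_inner_self_eq_norm_sq, hessianFlowEnergy]
  field_simp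
  ring

theorem antitoneOn_exp_mul_hessianFlowEnergy (hs : Convex ℝ s) (hr : 0 < r) {a H : ℝ → E} (z : E)
    (hx : ∀ t ∈ s, HasDerivWithinAt x (v t) s t) (hv : ∀ t ∈ s, HasDerivWithinAt v (a t) s t)
    (hp : ∀ t ∈ s, HasDerivWithinAt p (H t) s t)
    (hode : ∀ t ∈ s, a t + r • v t + (1 / r) • H t + p t = 0)
    (hH : ∀ t ∈ interior s, r ^ 2 / 2 * ‖v t‖ ^ 2 ≤ ⟪H t, v t⟫) :
    AntitoneOn (fun t => Real.exp (r * t) * hessianFlowEnergy r z (x t) (p t) (v t)) s := by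
  refine antitoneOn_exp_mul_of_hasDerivWithinAt_le hs (fun t ht =>
    hasDerivWithinAt_hessianFlowEnergy_of_flow hr.ne' z (hx t ht) (hv t ht) (hp t ht) (hode t ht))
    fun t ht => ?_
  have hdamping : r / 2 * ‖v t‖ ^ 2 ≤ 1 / r * ⟪H t, v t⟫ := by
    rw [one_div_mul_eq_div, le_div_iff₀ hr]
    linarith [hH t ht]
  linarith

/-- `g` is a selection of `μ`-strong subgradients of `f`, in place of its gradient. -/
theorem second_order_hessian_flow_lyapunov_general {μ : ℝ} (hμ : 0 < μ) {f : E → ℝ} {g : E → E}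
    (hsc : ∀ y z, f z ≥ f y + ⟪g y, z - y⟫ + μ / 2 * ‖z - y‖ ^ 2) (z : E)
    (hs : Convex ℝ s) {a H : ℝ → E}
    (hx : ∀ t ∈ s, HasDerivWithinAt x (v t) s t) (hv : ∀ t ∈ s, HasDerivWithinAt v (a t) s t)
    (hH : ∀ t ∈ s, HasDerivWithinAt (fun t => g (x t)) (H t) s t)
    (hode : ∀ t ∈ s, a t + √μ • v t + (1 / √μ) • H t + g (x t) = 0) :
    AntitoneOn (fun t => Real.exp (√μ * t) *
        ((f z - f (x t) + ⟪g (x t), x t - z⟫) + √μ * ⟪x t - z, v t⟫ + 1 / 2 * ‖v t‖ ^ 2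
          + (f (x t) - f z))) s
      ∧ ∀ t ∈ s, Real.exp (√μ * t) *
        ((f z - f (x t) + ⟪g (x t), x t - z⟫) + √μ * ⟪x t - z, v t⟫ + 1 / 2 * ‖v t‖ ^ 2
          + (f (x t) - f z))
        ≥ Real.exp (√μ * t) * (f (x t) - f z) := by
  have bracket_eq (t : ℝ) : (f z - f (x t) + ⟪g (x t), x t - z⟫) + √μ * ⟪x t - z, v t⟫
      + 1 / 2 * ‖v t‖ ^ 2 + (f (x t) - f z) = hessianFlowEnergy √μ z (x t) (g (x t)) (v t) := by
    rw [hessianFlowEnergy]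
    ring
  simp only [bracket_eq]
  refine ⟨antitoneOn_exp_mul_hessianFlowEnergy hs (Real.sqrt_pos.2 hμ) z hx hv hH hode
    fun t ht => ?_, fun t _ => mul_le_mul_of_nonneg_left ?_ (Real.exp_pos _).le⟩
  · have hHv : μ * ‖v t‖ ^ 2 ≤ ⟪H t, v t⟫ :=
      mul_norm_sq_le_inner_of_hasDerivWithinAt
        (uniqueDiffWithinAt_of_mem_nhds (mem_interior_iff_mem_nhds.1 ht))
        (fun τ _ => mul_norm_sq_le_inner_sub_of_strongConvex hsc (x t) (x τ))
        (hx t (interior_subset ht)) (hH t (interior_subset ht))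
    rw [Real.sq_sqrt hμ.le]
    linarith [mul_nonneg hμ.le (sq_nonneg ‖v t‖)]
  · have hconv := hsc (x t) z
    have henergy := inner_sub_le_hessianFlowEnergy √μ z (x t) (g (x t)) (v t)
    rw [Real.sq_sqrt hμ.le] at henergy
    rw [← neg_sub (x t) z, inner_neg_right, norm_neg] at hconv
    linarith

end InnerProductSpace

/-- Lyapunov function for the flow
`ẍ + √μ·ẋ + (1/√μ)·∇²f(x)·ẋ + ∇f(x) = 0`:
`E(t) = e^{√μ·t}[(f* − f(x(t)) + ⟨∇f(x(t)), x(t) − x*⟩) + √μ⟨x(t) − x*, ẋ(t)⟩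
        + (1/2)‖ẋ(t)‖² + (f(x(t)) − f*)]`
is non-increasing on `[0,∞)` and dominates `e^{√μ·t}(f(x(t)) − f*)`. -/
theorem second_order_hessian_flow_lyapunov {n : ℕ}
    (μ : ℝ) (hμ : 0 < μ)
    (f : EuclideanSpace ℝ (Fin n) → ℝ)
    (xstar : EuclideanSpace ℝ (Fin n))
    (hf : ContDiff ℝ 2 f)
    (hmin : ∀ y, f xstar ≤ f y)
    (hsc : ∀ y z : EuclideanSpace ℝ (Fin n),
      f z ≥ f y + ⟪gradient f y, z - y⟫ + μ / 2 * ‖z - y‖ ^ 2)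
    (x v a H : ℝ → EuclideanSpace ℝ (Fin n))
    (hx : ∀ t : ℝ, 0 ≤ t → HasDerivAt x (v t) t)
    (hv : ∀ t : ℝ, 0 ≤ t → HasDerivAt v (a t) t)
    (hH : ∀ t : ℝ, 0 ≤ t → HasDerivAt (fun s => gradient f (x s)) (H t) t)
    (hode : ∀ t : ℝ, 0 ≤ t →
      a t + Real.sqrt μ • v t + (1 / Real.sqrt μ) • H t + gradient f (x t) = 0) :
    AntitoneOn (fun t : ℝ =>
        Real.exp (Real.sqrt μ * t) *
          ((f xstar - f (x t) + ⟪gradient f (x t), x t - xstar⟫)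
            + Real.sqrt μ * ⟪x t - xstar, v t⟫
            + 1 / 2 * ‖v t‖ ^ 2
            + (f (x t) - f xstar))) (Set.Ici (0 : ℝ))
      ∧ ∀ t : ℝ, 0 ≤ t →
        Real.exp (Real.sqrt μ * t) *
          ((f xstar - f (x t) + ⟪gradient f (x t), x t - xstar⟫)
            + Real.sqrt μ * ⟪x t - xstar, v t⟫
            + 1 / 2 * ‖v t‖ ^ 2
            + (f (x t) - f xstar))
        ≥ Real.exp (Real.sqrt μ * t) * (f (x t) - f xstar) :=
  second_order_hessian_flow_lyapunov_general hμ hsc xstar (convex_Ici 0)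
    (fun t ht => (hx t ht).hasDerivWithinAt) (fun t ht => (hv t ht).hasDerivWithinAt)
    (fun t ht => (hH t ht).hasDerivWithinAt) hode
end

section
/- Let μ > 0, let k > 0, set T = 2(k² + μ)/k³, and let f : ℝⁿ → ℝ be a continuously differentiable μ-strongly convex function with global minimizer x*; write f* = f(x*). Let x : (0,T] → ℝⁿ be a twice differentiable solution of ẍ(t) + (4(k² + μ)/(k²·t))·ẋ(t) + ∇f(x(t)) = 0 for all t ∈ (0,T]. Then the function E(t) = ( 2(k² + μ)/(k·t) − k²/2 )·e^{kt}·‖x(t) − x*‖² + k·e^{kt}·⟨x(t) − x*, ẋ(t)⟩ + (1/2)·e^{kt}·‖ẋ(t)‖² + e^{kt}·( f(x(t)) − f* ) is non-increasing on (0,T], and E(t) ≥ e^{kt}·( f(x(t)) − f* ) for all t ∈ (0,T]; consequently f(x(t)) − f* ≤ e^{−k(t − t₀)}·E(t₀) whenever 0 < t₀ ≤ t ≤ T. -/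
open scoped RealInnerProductSpace

/-!
Completing the square, the Lyapunov function is
`e^{kt} (½‖ẋ + k(x - x*)‖² + (2(k² + μ)/(kt) - k²)‖x - x*‖² + f(x) - f*)`, whose middle coefficient
is nonnegative exactly for `t ≤ T`. Differentiating along the flow, the friction coefficient
`4(k² + μ)/(k²t)` is the one for which the terms in `⟨x - x*, ẋ⟩` cancel. What remains is a sum of
three nonpositive terms: a multiple of `‖ẋ‖²`, minus a square times `‖x - x*‖²`, and minus the
defect in the strong convexity inequality between `x` and `x*`.
-/

section Lyapunov

variable {E : Type*} [NormedAddCommGroup E] [InnerProductSpace ℝ E]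

lemma hasDerivWithinAt_exp_const_mul_mul {g : ℝ → ℝ} {g' k t : ℝ} {s : Set ℝ}
    (hg : HasDerivWithinAt g g' s t) :
    HasDerivWithinAt (fun u => Real.exp (k * u) * g u)
      (Real.exp (k * t) * (k * g t + g')) s t := by
  have hexp : HasDerivWithinAt (fun u => Real.exp (k * u)) (Real.exp (k * t) * k) s t := by
    simpa using ((hasDerivWithinAt_id t s).const_mul k).exp
  exact (hexp.mul hg).congr_deriv (by ring)

lemma le_exp_neg_mul_of_antitoneOn {g L : ℝ → ℝ} {k t₀ t : ℝ} {s : Set ℝ} (hL : AntitoneOn L s)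
    (hg : Real.exp (k * t) * g t ≤ L t) (ht₀ : t₀ ∈ s) (ht : t ∈ s) (htt : t₀ ≤ t) :
    g t ≤ Real.exp (-(k * t)) * L t₀ :=
  calc g t = Real.exp (-(k * t)) * (Real.exp (k * t) * g t) := by
        rw [← mul_assoc, ← Real.exp_add, neg_add_cancel, Real.exp_zero, one_mul]
    _ ≤ Real.exp (-(k * t)) * L t₀ := by
        gcongr
        exact hg.trans (hL ht₀ ht htt)

lemma hasDerivWithinAt_comp_of_hasGradientAt [CompleteSpace E] {f : E → ℝ} {f' x' : E}
    {x : ℝ → E} {s : Set ℝ} {t : ℝ} (hf : HasGradientAt f f' (x t))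
    (hx : HasDerivWithinAt x x' s t) :
    HasDerivWithinAt (fun u => f (x u)) ⟪f', x'⟫ s t := by
  simpa [Function.comp_def] using hf.hasFDerivAt.comp_hasDerivWithinAt t hx

/-- The Lyapunov function, at time `t`, of a curve `x` with velocity `v` for Nesterov's accelerated
gradient flow of `f`. The velocity is a separate argument, so that the definition involves no
derivative. -/
noncomputable def nagLyapunov (f : E → ℝ) (xstar : E) (μ k : ℝ) (x v : ℝ → E) (t : ℝ) : ℝ :=
  (2 * (k ^ 2 + μ) / (k * t) - k ^ 2 / 2) * Real.exp (k * t) * ‖x t - xstar‖ ^ 2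
    + k * Real.exp (k * t) * ⟪x t - xstar, v t⟫
    + 1 / 2 * Real.exp (k * t) * ‖v t‖ ^ 2
    + Real.exp (k * t) * (f (x t) - f xstar)

variable {f : E → ℝ} {xstar : E} {μ k t T : ℝ} {x v a : ℝ → E} {s : Set ℝ}

lemma nagLyapunov_eq_exp_mul_sum_sq :
    nagLyapunov f xstar μ k x v = fun t => Real.exp (k * t) *
      (1 / 2 * ‖v t + k • (x t - xstar)‖ ^ 2
        + (2 * (k ^ 2 + μ) / (k * t) - k ^ 2) * ‖x t - xstar‖ ^ 2
        + (f (x t) - f xstar)) := by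
  funext t
  have hsq : ‖v t + k • (x t - xstar)‖ ^ 2
      = ‖v t‖ ^ 2 + 2 * (k * ⟪x t - xstar, v t⟫) + k ^ 2 * ‖x t - xstar‖ ^ 2 := by
    rw [norm_add_sq_real, real_inner_smul_right, real_inner_comm, norm_smul, mul_pow,
      Real.norm_eq_abs, sq_abs]
  rw [nagLyapunov, hsq]
  ring

lemma exp_mul_sub_le_nagLyapunov (hk : 0 < k) (ht : 0 < t) (htT : t ≤ 2 * (k ^ 2 + μ) / k ^ 3) :
    Real.exp (k * t) * (f (x t) - f xstar) ≤ nagLyapunov f xstar μ k x v t := by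
  have hcoef : 0 ≤ 2 * (k ^ 2 + μ) / (k * t) - k ^ 2 := by
    rw [sub_nonneg, le_div_iff₀ (by positivity)]
    rw [le_div_iff₀ (by positivity)] at htT
    linarith
  simp only [nagLyapunov_eq_exp_mul_sum_sq]
  gcongr
  exact le_add_of_nonneg_left (by positivity)

/- With `w = x - x*`, `v = ẋ`, `a = ẍ`, `g = ∇f(x)` and `F = f(x) - f*`, the left-hand side is
`e^{-kt}` times the derivative of the Lyapunov function. -/
lemma nag_energy_rate_eq {w v a g : E} {F : ℝ} (hk : k ≠ 0) (ht : t ≠ 0)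
    (hode : a + (4 * (k ^ 2 + μ) / (k ^ 2 * t)) • v + g = 0) :
    k * (1 / 2 * ‖v + k • w‖ ^ 2 + (2 * (k ^ 2 + μ) / (k * t) - k ^ 2) * ‖w‖ ^ 2 + F)
        + (⟪v + k • w, a + k • v⟫
          + (-(2 * (k ^ 2 + μ) / (k * t ^ 2)) * ‖w‖ ^ 2
            + (2 * (k ^ 2 + μ) / (k * t) - k ^ 2) * (2 * ⟪w, v⟫))
          + ⟪g, v⟫)
      = -((4 * (k ^ 2 + μ) / (k ^ 2 * t) - 3 * k / 2) * ‖v‖ ^ 2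
          + k * (k ^ 2 + μ) / 2 * (1 - 2 / (k * t)) ^ 2 * ‖w‖ ^ 2
          + k * (⟪g, w⟫ - μ / 2 * ‖w‖ ^ 2 - F)) := by
  obtain rfl : a = -((4 * (k ^ 2 + μ) / (k ^ 2 * t)) • v + g) :=
    eq_neg_of_add_eq_zero_left (by rwa [← add_assoc])
  have hcross : k ^ 2 + k * (k - 4 * (k ^ 2 + μ) / (k ^ 2 * t))
      + 2 * (2 * (k ^ 2 + μ) / (k * t) - k ^ 2) = 0 := by
    field_simp
    ring
  have hpos : k ^ 3 / 2 + k * (2 * (k ^ 2 + μ) / (k * t) - k ^ 2) - 2 * (k ^ 2 + μ) / (k * t ^ 2)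
      = k * μ / 2 - k * (k ^ 2 + μ) / 2 * (1 - 2 / (k * t)) ^ 2 := by
    field_simp
    ring
  simp only [← real_inner_self_eq_norm_sq, inner_add_left, inner_add_right, inner_neg_right,
    real_inner_smul_left, real_inner_smul_right, real_inner_comm v w, real_inner_comm g v,
    real_inner_comm g w]
  linear_combination ⟪v, w⟫ * hcross + ⟪w, w⟫ * hpos

lemma hasDerivWithinAt_nagLyapunov [CompleteSpace E] (hk : k ≠ 0) (ht : t ≠ 0)
    (hf : DifferentiableAt ℝ f (x t)) (hx : HasDerivWithinAt x (v t) s t)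
    (hv : HasDerivWithinAt v (a t) s t)
    (hode : a t + (4 * (k ^ 2 + μ) / (k ^ 2 * t)) • v t + gradient f (x t) = 0) :
    HasDerivWithinAt (nagLyapunov f xstar μ k x v)
      (-(Real.exp (k * t) *
        ((4 * (k ^ 2 + μ) / (k ^ 2 * t) - 3 * k / 2) * ‖v t‖ ^ 2
          + k * (k ^ 2 + μ) / 2 * (1 - 2 / (k * t)) ^ 2 * ‖x t - xstar‖ ^ 2
          + k * (⟪gradient f (x t), x t - xstar⟫ - μ / 2 * ‖x t - xstar‖ ^ 2
            - (f (x t) - f xstar))))) s t := by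
  have hw : HasDerivWithinAt (fun u => x u - xstar) (v t) s t := hx.sub_const xstar
  have hkinetic : HasDerivWithinAt (fun u => 1 / 2 * ‖v u + k • (x u - xstar)‖ ^ 2)
      ⟪v t + k • (x t - xstar), a t + k • v t⟫ s t :=
    ((hv.add (hw.const_smul k)).norm_sq.const_mul (1 / 2)).congr_deriv (by simp)
  have hcoef : HasDerivWithinAt (fun u => 2 * (k ^ 2 + μ) / (k * u) - k ^ 2)
      (-(2 * (k ^ 2 + μ) / (k * t ^ 2))) s t := by
    refine (((hasDerivWithinAt_const t s (2 * (k ^ 2 + μ))).div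
      ((hasDerivWithinAt_id t s).const_mul k) (mul_ne_zero hk ht)).sub_const _).congr_deriv ?_
    simp only [id]
    field_simp
    ring
  have hgap := (hasDerivWithinAt_comp_of_hasGradientAt hf.hasGradientAt hx).sub_const (f xstar)
  rw [nagLyapunov_eq_exp_mul_sum_sq, ← mul_neg,
    ← nag_energy_rate_eq hk ht hode]
  exact hasDerivWithinAt_exp_const_mul_mul ((hkinetic.add (hcoef.mul hw.norm_sq)).add hgap)

lemma nag_dissipation_nonneg {w v g : E} {F : ℝ} (hk : 0 < k) (ht : 0 < t)
    (htT : t ≤ 8 * (k ^ 2 + μ) / (3 * k ^ 3)) (hF : F ≤ ⟪g, w⟫ - μ / 2 * ‖w‖ ^ 2) :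
    0 ≤ (4 * (k ^ 2 + μ) / (k ^ 2 * t) - 3 * k / 2) * ‖v‖ ^ 2
      + k * (k ^ 2 + μ) / 2 * (1 - 2 / (k * t)) ^ 2 * ‖w‖ ^ 2
      + k * (⟪g, w⟫ - μ / 2 * ‖w‖ ^ 2 - F) := by
  rw [le_div_iff₀ (by positivity)] at htT
  have hμ : 0 < k ^ 2 + μ := by
    have : 0 < t * (3 * k ^ 3) := by positivity
    linarith
  have hfriction : 0 ≤ 4 * (k ^ 2 + μ) / (k ^ 2 * t) - 3 * k / 2 := by
    rw [sub_nonneg, le_div_iff₀ (by positivity)]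
    linarith
  exact add_nonneg (by positivity) (mul_nonneg hk.le (sub_nonneg.2 hF))

lemma antitoneOn_nagLyapunov [CompleteSpace E] (hk : 0 < k) (hs : Convex ℝ s)
    (hsT : s ⊆ Set.Ioc 0 (8 * (k ^ 2 + μ) / (3 * k ^ 3))) (hf : Differentiable ℝ f)
    (hsc : ∀ y, f y + ⟪gradient f y, xstar - y⟫ + μ / 2 * ‖xstar - y‖ ^ 2 ≤ f xstar)
    (hx : ∀ t ∈ s, HasDerivWithinAt x (v t) s t)
    (hv : ∀ t ∈ s, HasDerivWithinAt v (a t) s t)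
    (hode : ∀ t ∈ s, a t + (4 * (k ^ 2 + μ) / (k ^ 2 * t)) • v t + gradient f (x t) = 0) :
    AntitoneOn (nagLyapunov f xstar μ k x v) s := by
  have hderiv := fun t ht => hasDerivWithinAt_nagLyapunov (xstar := xstar) hk.ne'
    (hsT ht).1.ne' (hf (x t)) (hx t ht) (hv t ht) (hode t ht)
  refine antitoneOn_of_hasDerivWithinAt_nonpos hs (fun t ht => (hderiv t ht).continuousWithinAt)
    (fun t ht => (hderiv t (interior_subset ht)).mono interior_subset) fun t ht => ?_
  obtain ⟨ht₀, htT⟩ := hsT (interior_subset ht)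
  have hgap : f (x t) - f xstar
      ≤ ⟪gradient f (x t), x t - xstar⟫ - μ / 2 * ‖x t - xstar‖ ^ 2 := by
    have h := hsc (x t)
    rw [← neg_sub (x t) xstar, inner_neg_right, norm_neg] at h
    linarith
  exact neg_nonpos.2 (mul_nonneg (Real.exp_pos _).le (nag_dissipation_nonneg hk ht₀ htT hgap))

theorem nag_flow_restricted_linear_rate_lyapunov_general [CompleteSpace E] (hk : 0 < k)
    (hT : T ≤ 2 * (k ^ 2 + μ) / k ^ 3) (hf : Differentiable ℝ f) (hmin : ∀ y, f xstar ≤ f y)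
    (hsc : ∀ y, f y + ⟪gradient f y, xstar - y⟫ + μ / 2 * ‖xstar - y‖ ^ 2 ≤ f xstar)
    (hx : ∀ t ∈ Set.Ioc 0 T, HasDerivWithinAt x (v t) (Set.Ioc 0 T) t)
    (hv : ∀ t ∈ Set.Ioc 0 T, HasDerivWithinAt v (a t) (Set.Ioc 0 T) t)
    (hode : ∀ t ∈ Set.Ioc 0 T,
      a t + (4 * (k ^ 2 + μ) / (k ^ 2 * t)) • v t + gradient f (x t) = 0) :
    AntitoneOn (nagLyapunov f xstar μ k x v) (Set.Ioc 0 T)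
      ∧ (∀ t ∈ Set.Ioc 0 T,
        Real.exp (k * t) * (f (x t) - f xstar) ≤ nagLyapunov f xstar μ k x v t)
      ∧ ∀ t₀ t : ℝ, 0 < t₀ → t₀ ≤ t → t ≤ T →
        f (x t) - f xstar ≤ Real.exp (-k * (t - t₀)) * nagLyapunov f xstar μ k x v t₀ := by
  have hIoc : Set.Ioc 0 T ⊆ Set.Ioc 0 (8 * (k ^ 2 + μ) / (3 * k ^ 3)) := by
    rintro t ⟨ht, htT⟩
    have h := htT.trans hT
    rw [le_div_iff₀ (by positivity)] at h
    have : 0 < t * k ^ 3 := by positivity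
    exact ⟨ht, (le_div_iff₀ (by positivity)).2 (by linarith)⟩
  have hanti := antitoneOn_nagLyapunov hk (convex_Ioc 0 T) hIoc hf hsc hx hv hode
  have hlower : ∀ t ∈ Set.Ioc 0 T,
      Real.exp (k * t) * (f (x t) - f xstar) ≤ nagLyapunov f xstar μ k x v t :=
    fun t ht => exp_mul_sub_le_nagLyapunov hk ht.1 (ht.2.trans hT)
  refine ⟨hanti, hlower, fun t₀ t ht₀ htt htT => ?_⟩
  have ht₀_mem : t₀ ∈ Set.Ioc 0 T := ⟨ht₀, htt.trans htT⟩
  have ht_mem : t ∈ Set.Ioc 0 T := ⟨ht₀.trans_le htt, htT⟩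
  have hnonneg : 0 ≤ nagLyapunov f xstar μ k x v t₀ :=
    (mul_nonneg (Real.exp_pos _).le (sub_nonneg.2 (hmin _))).trans (hlower t₀ ht₀_mem)
  calc f (x t) - f xstar
      ≤ Real.exp (-(k * t)) * nagLyapunov f xstar μ k x v t₀ :=
        le_exp_neg_mul_of_antitoneOn (g := fun u => f (x u) - f xstar) hanti
          (hlower t ht_mem) ht₀_mem ht_mem htt
    _ ≤ Real.exp (-k * (t - t₀)) * nagLyapunov f xstar μ k x v t₀ := by
        gcongr
        linarith [mul_pos hk ht₀]

end Lyapunov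

/-- For `μ, k > 0` and `T = 2(k² + μ)/k³`, with `f` continuously
differentiable and `μ`-strongly convex with minimizer `x*`, for a twice differentiable
solution of `ẍ(t) + (4(k² + μ)/(k²t))·ẋ(t) + ∇f(x(t)) = 0` on `(0,T]`, the function
`E(t) = (2(k² + μ)/(kt) − k²/2)e^{kt}‖x(t) − x*‖² + k e^{kt}⟨x(t) − x*, ẋ(t)⟩
        + (1/2)e^{kt}‖ẋ(t)‖² + e^{kt}(f(x(t)) − f*)`
is non-increasing on `(0,T]`, dominates `e^{kt}(f(x(t)) − f*)` there, and
consequently `f(x(t)) − f* ≤ e^{−k(t − t₀)}·E(t₀)` for `0 < t₀ ≤ t ≤ T`. -/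
theorem nag_flow_restricted_linear_rate_lyapunov {n : ℕ}
    (μ k T : ℝ) (hμ : 0 < μ) (hk : 0 < k)
    (hT : T = 2 * (k ^ 2 + μ) / k ^ 3)
    (f : EuclideanSpace ℝ (Fin n) → ℝ)
    (xstar : EuclideanSpace ℝ (Fin n))
    (hf : ContDiff ℝ 1 f)
    (hmin : ∀ y, f xstar ≤ f y)
    (hsc : ∀ y z : EuclideanSpace ℝ (Fin n),
      f z ≥ f y + ⟪gradient f y, z - y⟫ + μ / 2 * ‖z - y‖ ^ 2)
    (x v a : ℝ → EuclideanSpace ℝ (Fin n))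
    (hx : ∀ t ∈ Set.Ioc (0 : ℝ) T, HasDerivWithinAt x (v t) (Set.Ioc (0 : ℝ) T) t)
    (hv : ∀ t ∈ Set.Ioc (0 : ℝ) T, HasDerivWithinAt v (a t) (Set.Ioc (0 : ℝ) T) t)
    (hode : ∀ t ∈ Set.Ioc (0 : ℝ) T,
      a t + (4 * (k ^ 2 + μ) / (k ^ 2 * t)) • v t + gradient f (x t) = 0) :
    AntitoneOn (fun t : ℝ =>
        (2 * (k ^ 2 + μ) / (k * t) - k ^ 2 / 2) * Real.exp (k * t) * ‖x t - xstar‖ ^ 2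
          + k * Real.exp (k * t) * ⟪x t - xstar, v t⟫
          + 1 / 2 * Real.exp (k * t) * ‖v t‖ ^ 2
          + Real.exp (k * t) * (f (x t) - f xstar)) (Set.Ioc (0 : ℝ) T)
      ∧ (∀ t ∈ Set.Ioc (0 : ℝ) T,
        (2 * (k ^ 2 + μ) / (k * t) - k ^ 2 / 2) * Real.exp (k * t) * ‖x t - xstar‖ ^ 2
          + k * Real.exp (k * t) * ⟪x t - xstar, v t⟫
          + 1 / 2 * Real.exp (k * t) * ‖v t‖ ^ 2
          + Real.exp (k * t) * (f (x t) - f xstar)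
        ≥ Real.exp (k * t) * (f (x t) - f xstar))
      ∧ ∀ t₀ t : ℝ, 0 < t₀ → t₀ ≤ t → t ≤ T →
        f (x t) - f xstar ≤ Real.exp (-k * (t - t₀)) *
          ((2 * (k ^ 2 + μ) / (k * t₀) - k ^ 2 / 2) * Real.exp (k * t₀) * ‖x t₀ - xstar‖ ^ 2
            + k * Real.exp (k * t₀) * ⟪x t₀ - xstar, v t₀⟫
            + 1 / 2 * Real.exp (k * t₀) * ‖v t₀‖ ^ 2
            + Real.exp (k * t₀) * (f (x t₀) - f xstar)) :=
  nag_flow_restricted_linear_rate_lyapunov_general hk hT.le (hf.differentiable one_ne_zero) hmin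
    (fun y => hsc y xstar) hx hv hode
end

section
/- Let μ > 0, l > 0, c > 1, set T = 2(l² + 1)/(l³·√μ) and ρ = ( 2(c−1)·l² + 1 )·e^{(−1 + 1/c)·2(l² + 1)/l²}, and let f : ℝⁿ → ℝ be a continuously differentiable μ-strongly convex function with global minimizer x*; write f* = f(x*). Let (x_i)_{i≥1} be a sequence of twice differentiable trajectories x_i : [T/c, T] → ℝⁿ, each solving ẍ(t) + (4(l² + 1)/(l²·t))·ẋ(t) + ∇f(x(t)) = 0 on [T/c, T], with matching restart data x_{i+1}(T/c) = x_i(T) and ẋ_{i+1}(T/c) = ẋ_i(T) for all i ≥ 1. Define g_0 = f(x_1(T/c)) − f* + (1/2)·‖ẋ_1(T/c) + l√μ·(x_1(T/c) − x*)‖² and, for i ≥ 1, g_i = f(x_i(T)) − f* + (1/2)·‖ẋ_i(T) + l√μ·(x_i(T) − x*)‖². Then g_i ≤ ρ^i · g_0 for every i ≥ 1. -/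
open scoped RealInnerProductSpace

/-!
Along `ẍ + p(t) ẋ + ∇f(x) = 0`, adding the term `(a / 2) (p - 2a) ‖x - x*‖²` to
`f(x) - f* + ‖ẋ + a (x - x*)‖² / 2` gives an energy `𝓔` satisfying

  `𝓔' + a 𝓔 ≤ (3a / 2 - p) ‖ẋ‖² + (a / 2) (p' + a p - a² - μ) ‖x - x*‖²`,

so `𝓔` decays at rate `a` as soon as `3a / 2 ≤ p` and `p' + a p ≤ a² + μ`. For `p = 2aT / t` the
second condition follows from `a / t - 1 / t² ≤ a² / 4`, and the added term vanishes at `t = T`.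
At the restart time `T / c` quadratic growth bounds this term by a multiple of `f(x) - f*`; this is
the price of a restart, and gives the factor `2(c - 1) l² + 1` when `a = l √μ`.

Quadratic growth holds because the convexity inequality with target `x*` makes
`(f(x* + s d) - f*) / s - s μ ‖d‖² / 2` nondecreasing in `s > 0`, and this tends to
`⟪∇f(x*), d⟫ = 0` as `s → 0⁺`.
-/

lemma le_mul_exp_of_hasDerivWithinAt_le_s16 {g g' : ℝ → ℝ} {K t₀ T : ℝ} (hT : t₀ ≤ T)
    (hg : ∀ t ∈ Set.Icc t₀ T, HasDerivWithinAt g (g' t) (Set.Icc t₀ T) t)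
    (hbound : ∀ t ∈ Set.Icc t₀ T, g' t ≤ K * g t) :
    g T ≤ g t₀ * Real.exp (K * (T - t₀)) := by
  have hright : ∀ t ∈ Set.Ico t₀ T, HasDerivWithinAt g (g' t) (Set.Ici t) t := fun t ht =>
    (hg t (Set.Ico_subset_Icc_self ht)).mono_of_mem_nhdsWithin (Icc_mem_nhdsGE_of_mem ht)
  rw [← gronwallBound_ε0]
  exact le_gronwallBound_of_liminf_deriv_right_le
    (fun t ht => (hg t ht).continuousWithinAt)
    (fun t ht _ hr => (hright t ht).liminf_right_slope_le hr) le_rfl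
    (fun t ht => by simpa using hbound t (Set.Ico_subset_Icc_self ht)) T (Set.right_mem_Icc.2 hT)

section Energy

variable {E : Type*} [NormedAddCommGroup E] [InnerProductSpace ℝ E]
  {f : E → ℝ} {xstar : E} {μ a p : ℝ}

/-- The quantity `f(x) - f(x*) + ‖v + a (x - x*)‖² / 2` contracted by each round of the restart
scheme; `x` is the position and `v` the velocity. -/
noncomputable def restartEnergy (f : E → ℝ) (xstar : E) (a : ℝ) (x v : E) : ℝ :=
  f x - f xstar + 1 / 2 * ‖v + a • (x - xstar)‖ ^ 2

/-- The Lyapunov function of the damped flow: `restartEnergy` corrected by a multiple of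
`‖x - x*‖²` that vanishes when the current friction `p` equals `2 * a`. -/
noncomputable def dampedEnergy (f : E → ℝ) (xstar : E) (a p : ℝ) (x v : E) : ℝ :=
  restartEnergy f xstar a x v + a / 2 * (p - 2 * a) * ‖x - xstar‖ ^ 2

lemma restartEnergy_le_dampedEnergy (ha : 0 ≤ a) (hp : 2 * a ≤ p) (x v : E) :
    restartEnergy f xstar a x v ≤ dampedEnergy f xstar a p x v :=
  le_add_of_nonneg_right (mul_nonneg (mul_nonneg (by positivity) (sub_nonneg.2 hp)) (sq_nonneg _))

lemma dampedEnergy_le_mul_restartEnergy (hμ : 0 < μ) (ha : 0 ≤ a) (hp : 2 * a ≤ p)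
    {x : E} (hgrowth : μ / 2 * ‖x - xstar‖ ^ 2 ≤ f x - f xstar) (v : E) :
    dampedEnergy f xstar a p x v ≤
      (1 + a * (p - 2 * a) / μ) * restartEnergy f xstar a x v := by
  have hcoef : 0 ≤ a * (p - 2 * a) / μ := div_nonneg (mul_nonneg ha (sub_nonneg.2 hp)) hμ.le
  have hquad : μ / 2 * ‖x - xstar‖ ^ 2 ≤ restartEnergy f xstar a x v :=
    hgrowth.trans (le_add_of_nonneg_right (by positivity))
  calc dampedEnergy f xstar a p x v
      = restartEnergy f xstar a x v
          + a * (p - 2 * a) / μ * (μ / 2 * ‖x - xstar‖ ^ 2) := by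
        unfold dampedEnergy; field_simp
    _ ≤ restartEnergy f xstar a x v + a * (p - 2 * a) / μ * restartEnergy f xstar a x v :=
        add_le_add_right (mul_le_mul_of_nonneg_left hquad hcoef) _
    _ = (1 + a * (p - 2 * a) / μ) * restartEnergy f xstar a x v := by ring

end Energy

section Hilbert

variable {E : Type*} [NormedAddCommGroup E] [InnerProductSpace ℝ E] [CompleteSpace E]
  {f : E → ℝ} {xstar : E} {μ : ℝ}

lemma hasDerivWithinAt_comp_inner_gradient {x : ℝ → E} {v : E} {s : Set ℝ} {t : ℝ}
    (hf : DifferentiableAt ℝ f (x t)) (hx : HasDerivWithinAt x v s t) :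
    HasDerivWithinAt (fun s => f (x s)) ⟪gradient f (x t), v⟫ s t :=
  (hf.hasFDerivAt.comp_hasDerivWithinAt t hx).congr_deriv inner_gradient_left.symm

/-- Strong star-convexity (or quasi-strong convexity) about `xstar`: the quadratic lower models of
a `μ`-strongly convex function, required to minorize `f` at the single point `xstar`. It gives
both the decay of the energy and quadratic growth. -/
def StronglyStarConvexAt (f : E → ℝ) (μ : ℝ) (xstar : E) : Prop :=
  ∀ y, f y + ⟪gradient f y, xstar - y⟫ + μ / 2 * ‖xstar - y‖ ^ 2 ≤ f xstar

namespace StronglyStarConvexAt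

lemma sub_add_sq_le_inner (h : StronglyStarConvexAt f μ xstar) (y : E) :
    f y - f xstar + μ / 2 * ‖y - xstar‖ ^ 2 ≤ ⟪gradient f y, y - xstar⟫ := by
  have hy := h y
  rw [← neg_sub y xstar, inner_neg_right, norm_neg] at hy
  linarith

lemma monotoneOn_slope_sub (hf : Differentiable ℝ f) (h : StronglyStarConvexAt f μ xstar) (d : E) :
    MonotoneOn (fun s : ℝ => s⁻¹ * (f (xstar + s • d) - f xstar) - s * (μ / 2 * ‖d‖ ^ 2))
      (Set.Ioi 0) := by
  have hderiv : ∀ s ∈ Set.Ioi (0 : ℝ), HasDerivWithinAt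
      (fun s : ℝ => s⁻¹ * (f (xstar + s • d) - f xstar) - s * (μ / 2 * ‖d‖ ^ 2))
      (-(s ^ 2)⁻¹ * (f (xstar + s • d) - f xstar) + s⁻¹ * ⟪gradient f (xstar + s • d), d⟫
        - μ / 2 * ‖d‖ ^ 2) (Set.Ioi 0) s := by
    intro s hs
    have hray : HasDerivWithinAt (fun s : ℝ => xstar + s • d) d (Set.Ioi 0) s := by
      simpa using ((hasDerivWithinAt_id s _).smul_const d).const_add xstar
    have hfray := (hasDerivWithinAt_comp_inner_gradient (hf _) hray).sub_const (f xstar)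
    exact (((hasDerivWithinAt_inv hs.ne' _).mul hfray).sub
      ((hasDerivWithinAt_id s _).mul_const (μ / 2 * ‖d‖ ^ 2))).congr_deriv (by rw [one_mul])
  refine monotoneOn_of_hasDerivWithinAt_nonneg (convex_Ioi 0)
    (fun s hs => (hderiv s hs).continuousWithinAt)
    (by simpa only [interior_Ioi] using hderiv) ?_
  rw [interior_Ioi]
  intro s (hs : 0 < s)
  have hstar := h.sub_add_sq_le_inner (xstar + s • d)
  rw [add_sub_cancel_left, norm_smul, mul_pow, Real.norm_eq_abs, sq_abs,
    real_inner_smul_right] at hstar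
  have hscaled : 0 ≤ (s ^ 2)⁻¹ * (s * ⟪gradient f (xstar + s • d), d⟫
      - (f (xstar + s • d) - f xstar + μ / 2 * (s ^ 2 * ‖d‖ ^ 2))) :=
    mul_nonneg (by positivity) (sub_nonneg.2 hstar)
  refine hscaled.trans_eq ?_
  field_simp
  ring

lemma quadratic_growth (hf : Differentiable ℝ f) (h : StronglyStarConvexAt f μ xstar)
    (hcrit : gradient f xstar = 0) (y : E) :
    μ / 2 * ‖y - xstar‖ ^ 2 ≤ f y - f xstar := by
  set d := y - xstar with hd
  have hray : HasDerivAt (fun s : ℝ => f (xstar + s • d)) 0 0 := by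
    have hline : HasDerivAt (fun s : ℝ => xstar + s • d) d 0 := by
      simpa using ((hasDerivAt_id (0 : ℝ)).smul_const d).const_add xstar
    simpa [hcrit] using
      hasDerivWithinAt_comp_inner_gradient (hf _) (hline.hasDerivWithinAt (s := .univ))
  have hslope : Filter.Tendsto
      (fun s : ℝ => s⁻¹ * (f (xstar + s • d) - f xstar) - s * (μ / 2 * ‖d‖ ^ 2))
      (nhdsWithin 0 (Set.Ioi 0)) (nhds 0) := by
    have hlin : Filter.Tendsto (fun s : ℝ => s * (μ / 2 * ‖d‖ ^ 2))
        (nhdsWithin 0 (Set.Ioi 0)) (nhds 0) :=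
      ((continuous_mul_const _).tendsto' 0 0 (zero_mul _)).mono_left nhdsWithin_le_nhds
    simpa using hray.tendsto_slope_zero_right.sub hlin
  have hle := le_of_tendsto hslope <| by
    filter_upwards [Ioc_mem_nhdsGT one_pos] with s hs
    exact h.monotoneOn_slope_sub hf d hs.1 (Set.mem_Ioi.2 one_pos) hs.2
  simpa [hd] using hle

end StronglyStarConvexAt

/-- The curve `x` solves `ẍ + p(t) ẋ + ∇f(x) = 0` on the set of times `s`, with velocity `v` and
acceleration `v'`. Derivatives are taken within `s`, hence one-sided at the endpoints of an
interval. -/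
structure IsDampedGradientFlowOn (f : E → ℝ) (p : ℝ → ℝ) (s : Set ℝ) (x v v' : ℝ → E) :
    Prop where
  position : ∀ t ∈ s, HasDerivWithinAt x (v t) s t
  velocity : ∀ t ∈ s, HasDerivWithinAt v (v' t) s t
  ode : ∀ t ∈ s, v' t + p t • v t + gradient f (x t) = 0

namespace IsDampedGradientFlowOn

variable {a : ℝ} {p p' : ℝ → ℝ} {x v v' : ℝ → E}

lemma hasDerivWithinAt_dampedEnergy {s : Set ℝ} (h : IsDampedGradientFlowOn f p s x v v')
    (hf : Differentiable ℝ f) {t : ℝ} (ht : t ∈ s) (hp : HasDerivWithinAt p (p' t) s t) :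
    HasDerivWithinAt (fun t => dampedEnergy f xstar a (p t) (x t) (v t))
      (-a * ⟪gradient f (x t), x t - xstar⟫ + (a - p t) * ‖v t‖ ^ 2
        - a ^ 2 * ⟪v t, x t - xstar⟫ + a / 2 * p' t * ‖x t - xstar‖ ^ 2) s t := by
  have hpot := (hasDerivWithinAt_comp_inner_gradient (hf _) (h.position t ht)).sub_const (f xstar)
  have hdisp : HasDerivWithinAt (fun t => x t - xstar) (v t) s t :=
    (h.position t ht).sub_const xstar
  have hmixed := ((h.velocity t ht).add (hdisp.const_smul a)).norm_sq.const_mul (1 / 2)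
  have hcorr := ((hp.sub_const (2 * a)).const_mul (a / 2)).mul hdisp.norm_sq
  have hacc : v' t = -(p t • v t) - gradient f (x t) := by
    rw [← sub_eq_zero, ← h.ode t ht]; abel
  refine ((hpot.add hmixed).add hcorr).congr_deriv ?_
  simp only [hacc, Pi.add_apply, Pi.smul_apply]
  generalize x t - xstar = y
  rw [real_inner_comm (v t) (gradient f (x t)), real_inner_comm y (gradient f (x t)),
    real_inner_comm y (v t)]
  simp only [inner_add_left, inner_add_right, inner_sub_right, inner_neg_right,
    real_inner_smul_left, real_inner_smul_right, real_inner_self_eq_norm_sq]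
  ring

lemma dampedEnergy_le_mul_exp {t₀ T : ℝ}
    (h : IsDampedGradientFlowOn f p (Set.Icc t₀ T) x v v') (hf : Differentiable ℝ f)
    (hstar : StronglyStarConvexAt f μ xstar) (ha : 0 ≤ a) (hT : t₀ ≤ T)
    (hp : ∀ t ∈ Set.Icc t₀ T, HasDerivWithinAt p (p' t) (Set.Icc t₀ T) t)
    (hp_ge : ∀ t ∈ Set.Icc t₀ T, 3 / 2 * a ≤ p t)
    (hp_rate : ∀ t ∈ Set.Icc t₀ T, p' t + a * p t ≤ a ^ 2 + μ) :
    dampedEnergy f xstar a (p T) (x T) (v T) ≤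
      dampedEnergy f xstar a (p t₀) (x t₀) (v t₀) * Real.exp (-a * (T - t₀)) := by
  refine le_mul_exp_of_hasDerivWithinAt_le_s16
    (g := fun t => dampedEnergy f xstar a (p t) (x t) (v t)) hT
    (fun t ht => h.hasDerivWithinAt_dampedEnergy hf ht (hp t ht)) fun t ht => ?_
  have hconv := mul_le_mul_of_nonneg_left (hstar.sub_add_sq_le_inner (x t)) ha
  have hvel := mul_nonneg (sub_nonneg.2 (hp_ge t ht)) (sq_nonneg ‖v t‖)
  have hrate := mul_nonneg (mul_nonneg ha (sub_nonneg.2 (hp_rate t ht)))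
    (sq_nonneg ‖x t - xstar‖)
  have hmixed : ‖v t + a • (x t - xstar)‖ ^ 2 = ‖v t‖ ^ 2
      + 2 * (a * ⟪v t, x t - xstar⟫) + a ^ 2 * ‖x t - xstar‖ ^ 2 := by
    rw [norm_add_sq_real, real_inner_smul_right, norm_smul, mul_pow, Real.norm_eq_abs, sq_abs]
  rw [dampedEnergy, restartEnergy, hmixed]
  linarith

lemma restartEnergy_le {t₀ T : ℝ}
    (h : IsDampedGradientFlowOn f p (Set.Icc t₀ T) x v v') (hf : Differentiable ℝ f)
    (hcrit : gradient f xstar = 0) (hstar : StronglyStarConvexAt f μ xstar)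
    (hμ : 0 < μ) (ha : 0 ≤ a) (hT : t₀ ≤ T)
    (hp : ∀ t ∈ Set.Icc t₀ T, HasDerivWithinAt p (p' t) (Set.Icc t₀ T) t)
    (hp_ge : ∀ t ∈ Set.Icc t₀ T, 2 * a ≤ p t)
    (hp_rate : ∀ t ∈ Set.Icc t₀ T, p' t + a * p t ≤ a ^ 2 + μ) :
    restartEnergy f xstar a (x T) (v T) ≤
      (1 + a * (p t₀ - 2 * a) / μ) * Real.exp (-a * (T - t₀)) *
        restartEnergy f xstar a (x t₀) (v t₀) :=
  calc restartEnergy f xstar a (x T) (v T)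
      ≤ dampedEnergy f xstar a (p T) (x T) (v T) :=
        restartEnergy_le_dampedEnergy ha (hp_ge T (Set.right_mem_Icc.2 hT)) _ _
    _ ≤ dampedEnergy f xstar a (p t₀) (x t₀) (v t₀) * Real.exp (-a * (T - t₀)) :=
        h.dampedEnergy_le_mul_exp hf hstar ha hT hp
          (fun t ht => by linarith [hp_ge t ht]) hp_rate
    _ ≤ (1 + a * (p t₀ - 2 * a) / μ) * restartEnergy f xstar a (x t₀) (v t₀) *
          Real.exp (-a * (T - t₀)) := by
        gcongr
        exact dampedEnergy_le_mul_restartEnergy hμ ha (hp_ge t₀ (Set.left_mem_Icc.2 hT))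
          (hstar.quadratic_growth hf hcrit _) _
    _ = _ := mul_right_comm _ _ _

lemma restartEnergy_le_of_inverse_time {c T : ℝ}
    (h : IsDampedGradientFlowOn f (fun t => 2 * a * T / t) (Set.Icc (T / c) T) x v v')
    (hf : Differentiable ℝ f) (hcrit : gradient f xstar = 0)
    (hstar : StronglyStarConvexAt f μ xstar) (hμ : 0 < μ) (ha : 0 ≤ a) (hT : 0 < T) (hc : 1 ≤ c)
    (hrate : a ^ 3 * T ≤ 2 * (a ^ 2 + μ)) :
    restartEnergy f xstar a (x T) (v T) ≤
      (1 + 2 * (c - 1) * a ^ 2 / μ) * Real.exp (-a * (T - T / c)) *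
        restartEnergy f xstar a (x (T / c)) (v (T / c)) := by
  have hc₀ : 0 < c := one_pos.trans_le hc
  have hpos : ∀ t ∈ Set.Icc (T / c) T, 0 < t := fun t ht => (div_pos hT hc₀).trans_le ht.1
  have hfriction : ∀ t ∈ Set.Icc (T / c) T,
      HasDerivWithinAt (fun t => 2 * a * T / t) (2 * a * T * -(t ^ 2)⁻¹) (Set.Icc (T / c) T) t :=
    fun t ht => (hasDerivWithinAt_inv (hpos t ht).ne' _).const_mul (2 * a * T)
  have hround := h.restartEnergy_le hf hcrit hstar hμ ha (div_le_self hT.le hc) hfriction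
    (fun t ht => ?_) (fun t ht => ?_)
  · have hstart : a * (2 * a * T / (T / c) - 2 * a) / μ = 2 * (c - 1) * a ^ 2 / μ := by
      field_simp
    rwa [hstart] at hround
  · rw [le_div_iff₀ (hpos t ht)]
    exact mul_le_mul_of_nonneg_left ht.2 (by positivity)
  · have ht₀ := (hpos t ht).ne'
    have hsq : 0 ≤ 2 * a * T * (t⁻¹ - a / 2) ^ 2 := by positivity
    calc 2 * a * T * -(t ^ 2)⁻¹ + a * (2 * a * T / t)
        = a ^ 3 * T / 2 - 2 * a * T * (t⁻¹ - a / 2) ^ 2 := by field_simp; ring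
      _ ≤ a ^ 2 + μ := by linarith

end IsDampedGradientFlowOn

theorem nag_flow_restart_scheme_general
    (μ l c T ρ : ℝ) (hμ : 0 < μ) (hl : 0 < l) (hc : 1 ≤ c)
    (hT : T = 2 * (l ^ 2 + 1) / (l ^ 3 * Real.sqrt μ))
    (hρ : ρ = (2 * (c - 1) * l ^ 2 + 1) *
      Real.exp ((-1 + 1 / c) * (2 * (l ^ 2 + 1) / l ^ 2)))
    (f : E → ℝ) (xstar : E) (hf : Differentiable ℝ f) (hcrit : gradient f xstar = 0)
    (hstar : StronglyStarConvexAt f μ xstar) (X V A : ℕ → ℝ → E)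
    (hflow : ∀ i : ℕ, 1 ≤ i → IsDampedGradientFlowOn f
      (fun t => 4 * (l ^ 2 + 1) / (l ^ 2 * t)) (Set.Icc (T / c) T) (X i) (V i) (A i))
    (hrestart_x : ∀ i : ℕ, 1 ≤ i → X (i + 1) (T / c) = X i T)
    (hrestart_v : ∀ i : ℕ, 1 ≤ i → V (i + 1) (T / c) = V i T) (i : ℕ) (hi : 1 ≤ i) :
    restartEnergy f xstar (l * Real.sqrt μ) (X i T) (V i T) ≤
      ρ ^ i * restartEnergy f xstar (l * Real.sqrt μ) (X 1 (T / c)) (V 1 (T / c)) := by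
  set a := l * Real.sqrt μ with ha
  have ha_sq : a ^ 2 = l ^ 2 * μ := by rw [ha, mul_pow, Real.sq_sqrt hμ.le]
  have haT : a * T = 2 * (l ^ 2 + 1) / l ^ 2 := by rw [hT, ha]; field_simp
  have hfriction : (fun t => 4 * (l ^ 2 + 1) / (l ^ 2 * t)) = fun t => 2 * a * T / t := by
    funext t
    rw [mul_assoc, haT, ← div_div]
    ring
  have hrate : a ^ 3 * T = 2 * (a ^ 2 + μ) := by
    rw [pow_succ, mul_assoc, haT, ha_sq]
    field_simp
  have hρ' : ρ = (1 + 2 * (c - 1) * a ^ 2 / μ) * Real.exp (-a * (T - T / c)) := by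
    rw [hρ, ← haT, ha_sq]
    field_simp
    ring_nf
  have hρ₀ : 0 ≤ ρ := by
    have := sub_nonneg.2 hc
    rw [hρ]; positivity
  have hround : ∀ j, 1 ≤ j → restartEnergy f xstar a (X j T) (V j T) ≤
      ρ * restartEnergy f xstar a (X j (T / c)) (V j (T / c)) := fun j hj =>
    hρ' ▸ (hfriction ▸ hflow j hj).restartEnergy_le_of_inverse_time hf hcrit hstar hμ
      (by positivity) (by rw [hT]; positivity) hc hrate.le
  rw [← hrestart_x i hi, ← hrestart_v i hi]
  refine le_geom (u := fun k => restartEnergy f xstar a (X (k + 1) (T / c)) (V (k + 1) (T / c)))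
    hρ₀ i fun k _ => ?_
  rw [hrestart_x _ k.succ_pos, hrestart_v _ k.succ_pos]
  exact hround _ k.succ_pos

end Hilbert

/-- Restart scheme: with `μ > 0`, `l > 0`, `c > 1`,
`T = 2(l² + 1)/(l³√μ)` and `ρ = (2(c−1)l² + 1)·e^{(−1 + 1/c)·2(l² + 1)/l²}`, a sequence of
trajectories `x_i` on `[T/c, T]`, each solving `ẍ + (4(l² + 1)/(l²t))ẋ + ∇f(x) = 0` with
matching restart data `x_{i+1}(T/c) = x_i(T)`, `ẋ_{i+1}(T/c) = ẋ_i(T)`, satisfies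
`g_i ≤ ρ^i · g_0`, where `g_0 = f(x_1(T/c)) − f* + (1/2)‖ẋ_1(T/c) + l√μ(x_1(T/c) − x*)‖²`
and `g_i = f(x_i(T)) − f* + (1/2)‖ẋ_i(T) + l√μ(x_i(T) − x*)‖²` for `i ≥ 1`. -/
theorem nag_flow_restart_scheme {n : ℕ}
    (μ l c T ρ : ℝ) (hμ : 0 < μ) (hl : 0 < l) (hc : 1 < c)
    (hT : T = 2 * (l ^ 2 + 1) / (l ^ 3 * Real.sqrt μ))
    (hρ : ρ = (2 * (c - 1) * l ^ 2 + 1) *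
      Real.exp ((-1 + 1 / c) * (2 * (l ^ 2 + 1) / l ^ 2)))
    (f : EuclideanSpace ℝ (Fin n) → ℝ)
    (xstar : EuclideanSpace ℝ (Fin n))
    (hf : ContDiff ℝ 1 f)
    (hmin : ∀ y, f xstar ≤ f y)
    (hsc : ∀ y z : EuclideanSpace ℝ (Fin n),
      f z ≥ f y + ⟪gradient f y, z - y⟫ + μ / 2 * ‖z - y‖ ^ 2)
    (X V A : ℕ → ℝ → EuclideanSpace ℝ (Fin n))
    (hx : ∀ i : ℕ, 1 ≤ i → ∀ t ∈ Set.Icc (T / c) T,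
      HasDerivWithinAt (X i) (V i t) (Set.Icc (T / c) T) t)
    (hv : ∀ i : ℕ, 1 ≤ i → ∀ t ∈ Set.Icc (T / c) T,
      HasDerivWithinAt (V i) (A i t) (Set.Icc (T / c) T) t)
    (hode : ∀ i : ℕ, 1 ≤ i → ∀ t ∈ Set.Icc (T / c) T,
      A i t + (4 * (l ^ 2 + 1) / (l ^ 2 * t)) • V i t + gradient f (X i t) = 0)
    (hrestart_x : ∀ i : ℕ, 1 ≤ i → X (i + 1) (T / c) = X i T)
    (hrestart_v : ∀ i : ℕ, 1 ≤ i → V (i + 1) (T / c) = V i T) :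
    ∀ i : ℕ, 1 ≤ i →
      f (X i T) - f xstar
          + 1 / 2 * ‖V i T + (l * Real.sqrt μ) • (X i T - xstar)‖ ^ 2
        ≤ ρ ^ i *
          (f (X 1 (T / c)) - f xstar
            + 1 / 2 * ‖V 1 (T / c) + (l * Real.sqrt μ) • (X 1 (T / c) - xstar)‖ ^ 2) := by
  have hcrit : gradient f xstar = 0 := by
    simp [gradient, IsLocalMin.fderiv_eq_zero (Filter.Eventually.of_forall hmin)]
  exact nag_flow_restart_scheme_general μ l c T ρ hμ hl hc.le hT hρ f xstar
    (hf.differentiable one_ne_zero) hcrit (fun y => hsc y xstar) X V A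
    (fun i hi => ⟨hx i hi, hv i hi, hode i hi⟩) hrestart_x hrestart_v
end
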